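/- Fix an integer r ≥ 2 and ε, D > 0. Then for every N, every integer d with 1 ≤ d ≤ N/2 and every d-regular adjacency matrix 𝒜 one has (𝒜^{2r})_{ii} − d^{2r} N^{−1} ≥ 0 for all i; moreover there exists N₀ such that for all N ≥ N₀, all integers d with 1 ≤ d ≤ N/2 and dN even, and every index i, the uniform random d-regular graph satisfies ℙ( (𝒜^{2r})_{ii} − d^{2r} N^{−1} ≥ N^ε d^{2r−2} ) ≤ N^{−D}. -/

import Mathlib

open MeasureTheory Filter Matrix
open scoped ENNReal NNReal

noncomputable section

/-- `A` is the adjacency matrix of a `d`-regular graph on `N` vertices: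
a symmetric `{0,1}`-matrix with zero diagonal and all row sums equal to `d`. -/
def IsAdjMat (N d : ℕ) (A : Matrix (Fin N) (Fin N) ℝ) : Prop :=
  A.IsSymm ∧ (∀ i, A i i = 0) ∧ (∀ i j, A i j = 0 ∨ A i j = 1) ∧ ∀ i, ∑ j, A i j = d

/-- probability of an event under the uniform measure on `d`-regular graphs on `N` vertices. -/
def PrReg (N d : ℕ) (E : Matrix (Fin N) (Fin N) ℝ → Prop) : ℝ :=
  (Nat.card {A : Matrix (Fin N) (Fin N) ℝ // IsAdjMat N d A ∧ E A} : ℝ) /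
    (Nat.card {A : Matrix (Fin N) (Fin N) ℝ // IsAdjMat N d A} : ℝ)

/-- expectation of `F` under the uniform measure on `d`-regular graphs on `N` vertices. -/
def Ereg (N d : ℕ) (F : Matrix (Fin N) (Fin N) ℝ → ℝ) : ℝ :=
  (∑ᶠ A : {A : Matrix (Fin N) (Fin N) ℝ // IsAdjMat N d A}, F A.1) /
    (Nat.card {A : Matrix (Fin N) (Fin N) ℝ // IsAdjMat N d A} : ℝ)

/-- the `k`-th largest eigenvalue (`1`-based indexing) of a symmetric matrix. -/
def eigval {N : ℕ} (A : Matrix (Fin N) (Fin N) ℝ) (k : ℕ) : ℝ :=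
  if hA : A.IsHermitian then
    if h : k - 1 < N then
      hA.eigenvalues (Tuple.sort hA.eigenvalues (Fin.rev ⟨k - 1, h⟩))
    else 0
  else 0

/-- `q = √(d(N-d)/N)`. -/
def qval (N d : ℕ) : ℝ := Real.sqrt ((d : ℝ) * ((N : ℝ) - (d : ℝ)) / (N : ℝ))

/-- the projection `P⊥ = I - e eᵀ` (complex version). -/
def Pperp (N : ℕ) : Matrix (Fin N) (Fin N) ℂ := 1 - Matrix.of fun _ _ => (N : ℂ)⁻¹

/-- the projection `P⊥ = I - e eᵀ` (real version). -/
def PperpR (N : ℕ) : Matrix (Fin N) (Fin N) ℝ := 1 - Matrix.of fun _ _ => (N : ℝ)⁻¹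

/-- the Green function `G(z) = P⊥ (q⁻¹𝒜 - z)⁻¹ P⊥`. -/
def greenM (N d : ℕ) (A : Matrix (Fin N) (Fin N) ℝ) (z : ℂ) : Matrix (Fin N) (Fin N) ℂ :=
  Pperp N * (((qval N d : ℝ) : ℂ)⁻¹ • A.map Complex.ofReal - z • 1)⁻¹ * Pperp N

/-- the normalized trace `Ḡ(z) = N⁻¹ Tr G(z)`. -/
def gbar (N d : ℕ) (A : Matrix (Fin N) (Fin N) ℝ) (z : ℂ) : ℂ :=
  (N : ℂ)⁻¹ * (greenM N d A z).trace

/-- the Stieltjes transform of the semicircle density `ϱ(x) = (2π)⁻¹ √((4-x²)₊)`. -/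
def mSC (z : ℂ) : ℂ :=
  ∫ x in (-2 : ℝ)..2, ((Real.sqrt (4 - x ^ 2) / (2 * Real.pi) : ℝ) : ℂ) / ((x : ℂ) - z)

/-- `(Δ_{ij})_{xy} = δ_{ix}δ_{jy} + δ_{iy}δ_{jx}`. -/
def Dmat (N : ℕ) (i j : Fin N) : Matrix (Fin N) (Fin N) ℝ :=
  Matrix.of fun x y =>
    (if i = x ∧ j = y then (1 : ℝ) else 0) + (if i = y ∧ j = x then (1 : ℝ) else 0)

/-- `ξ_{ij}^{kl} = Δ_{ij} + Δ_{kl} - Δ_{ik} - Δ_{jl}`. -/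
def xiMat (N : ℕ) (i j k l : Fin N) : Matrix (Fin N) (Fin N) ℝ :=
  Dmat N i j + Dmat N k l - Dmat N i k - Dmat N j l

/-- `χ_{ij}^{kl}(𝒜) = 𝒜_{ij}(1-𝒜_{ik})𝒜_{kl}(1-𝒜_{jl})`. -/
def chi (N : ℕ) (A : Matrix (Fin N) (Fin N) ℝ) (i j k l : Fin N) : ℝ :=
  A i j * (1 - A i k) * A k l * (1 - A j l)

/-- `𝓜_{ij}(F(𝒜)) = max_{k,l} |F(𝒜 + ξ_{ij}^{kl})|`. -/
def Mmax (N : ℕ) (i j : Fin N) (F : Matrix (Fin N) (Fin N) ℝ → ℝ)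
    (A : Matrix (Fin N) (Fin N) ℝ) : ℝ :=
  ⨆ p : Fin N × Fin N, |F (A + xiMat N i j p.1 p.2)|

instance matMS (N : ℕ) : MeasurableSpace (Matrix (Fin N) (Fin N) ℝ) :=
  show MeasurableSpace (Fin N → Fin N → ℝ) from inferInstance

/-- the GOE: push-forward of independent centered Gaussians with variance `(1+δ_{ij})/N`
on the upper triangle under the symmetrization map. -/
def goeMeasure (N : ℕ) : Measure (Matrix (Fin N) (Fin N) ℝ) :=
  Measure.map (fun f => Matrix.of fun i j => if i ≤ j then f (i, j) else f (j, i))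
    (Measure.pi fun p : Fin N × Fin N =>
      ProbabilityTheory.gaussianReal 0 (if p.1 = p.2 then 2 / N else 1 / N))

/-- the uniform probability measure on `d`-regular graphs on `N` vertices, as a measure. -/
def uniformReg (N d : ℕ) : Measure (Matrix (Fin N) (Fin N) ℝ) :=
  (Nat.card {A : Matrix (Fin N) (Fin N) ℝ // IsAdjMat N d A} : ℝ≥0∞)⁻¹ •
    Measure.sum fun A : {A : Matrix (Fin N) (Fin N) ℝ // IsAdjMat N d A} =>
      Measure.dirac A.1

/-- the matrix flow `A(t) = e^{-t/2} q⁻¹𝒜 + √(1-e^{-t}) W`, where `W = P⊥ H P⊥`. -/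
def flowMat (N d : ℕ) (A H : Matrix (Fin N) (Fin N) ℝ) (t : ℝ) : Matrix (Fin N) (Fin N) ℝ :=
  Real.exp (-t / 2) • ((qval N d)⁻¹ • A) +
    Real.sqrt (1 - Real.exp (-t)) • (PperpR N * H * PperpR N)

/-- the Green function of the matrix flow, `G(t;z) = P⊥ (A(t) - z)⁻¹ P⊥`. -/
def greenFlow (N d : ℕ) (A H : Matrix (Fin N) (Fin N) ℝ) (t : ℝ) (z : ℂ) :
    Matrix (Fin N) (Fin N) ℂ :=
  Pperp N * ((flowMat N d A H t).map Complex.ofReal - z • 1)⁻¹ * Pperp N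

/-- the normalized trace of the Green function of the flow. -/
def gbarFlow (N d : ℕ) (A H : Matrix (Fin N) (Fin N) ℝ) (t : ℝ) (z : ℂ) : ℂ :=
  (N : ℂ)⁻¹ * (greenFlow N d A H t z).trace

section Helpers

variable {N d : ℕ} {A : Matrix (Fin N) (Fin N) ℝ}

lemma adj_nonneg (h : IsAdjMat N d A) (i j : Fin N) : 0 ≤ A i j := by
  rcases h.2.2.1 i j with h | h <;> simp [h]

lemma adj_le_one (h : IsAdjMat N d A) (i j : Fin N) : A i j ≤ 1 := by
  rcases h.2.2.1 i j with h | h <;> simp [h]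

lemma adj_pow_symm (h : IsAdjMat N d A) (n : ℕ) (i j : Fin N) : (A ^ n) i j = (A ^ n) j i := by
  have := h.1.pow n
  exact (this.apply i j).symm

lemma adj_pow_nonneg (h : IsAdjMat N d A) (n : ℕ) : ∀ i j : Fin N, 0 ≤ (A ^ n) i j := by
  induction n with
  | zero => intro i j; rw [pow_zero, Matrix.one_apply]; split_ifs <;> norm_num
  | succ n ih =>
    intro i j
    rw [pow_succ, Matrix.mul_apply]
    exact Finset.sum_nonneg fun k _ => mul_nonneg (ih i k) (adj_nonneg h k j)

lemma adj_row_pow (h : IsAdjMat N d A) (n : ℕ) : ∀ i : Fin N, ∑ j, (A ^ n) i j = (d : ℝ) ^ n := by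
  induction n with
  | zero => intro i; simp [Matrix.one_apply]
  | succ n ih =>
    intro i
    simp_rw [pow_succ A, Matrix.mul_apply]
    rw [Finset.sum_comm]
    simp_rw [← Finset.mul_sum, h.2.2.2, ← Finset.sum_mul, ih]
    ring

lemma adj_col (h : IsAdjMat N d A) (j : Fin N) : ∑ k, A k j = (d : ℝ) := by
  rw [← h.2.2.2 j]
  exact Finset.sum_congr rfl fun k _ => h.1.apply j k

lemma adj_pow_le (h : IsAdjMat N d A) (n : ℕ) (i j : Fin N) :
    (A ^ (n + 1)) i j ≤ (d : ℝ) ^ n := by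
  rw [pow_succ, Matrix.mul_apply, ← adj_row_pow h n i]
  exact Finset.sum_le_sum fun k _ =>
    mul_le_of_le_one_right (adj_pow_nonneg h n i k) (adj_le_one h k j)

lemma norm_w (h : IsAdjMat N d A) (hN : 0 < N) (n : ℕ) (i : Fin N) :
    ∑ j, ((A ^ n) i j - (d : ℝ) ^ n / N) ^ 2 = (A ^ (2 * n)) i i - (d : ℝ) ^ (2 * n) / N := by
  have hN' : (N : ℝ) ≠ 0 := by positivity
  have e : (A ^ (2 * n)) i i = ∑ j, (A ^ n) i j * (A ^ n) i j := by
    rw [two_mul, pow_add, Matrix.mul_apply]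
    exact Finset.sum_congr rfl fun k _ => by rw [adj_pow_symm h n k i]
  have : ∀ j, ((A ^ n) i j - (d : ℝ) ^ n / N) ^ 2
      = (A ^ n) i j * (A ^ n) i j - 2 * ((d : ℝ) ^ n / N) * (A ^ n) i j
        + ((d : ℝ) ^ n / N) ^ 2 := by intro j; ring
  simp_rw [this]
  rw [Finset.sum_add_distrib, Finset.sum_sub_distrib, ← Finset.mul_sum, adj_row_pow h, ← e]
  simp only [Finset.sum_const, Finset.card_univ, Fintype.card_fin, nsmul_eq_mul]
  field_simp
  ring

lemma w_succ (h : IsAdjMat N d A) (n : ℕ) (i j : Fin N) :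
    (A ^ (n + 1)) i j - (d : ℝ) ^ (n + 1) / N
      = ∑ k, ((A ^ n) i k - (d : ℝ) ^ n / N) * A k j := by
  simp_rw [sub_mul]
  rw [Finset.sum_sub_distrib, ← Finset.mul_sum, adj_col h, pow_succ, Matrix.mul_apply]
  ring

lemma w_succ_sq (h : IsAdjMat N d A) (n : ℕ) (i j : Fin N) :
    ((A ^ (n + 1)) i j - (d : ℝ) ^ (n + 1) / N) ^ 2
      ≤ d * ∑ k, ((A ^ n) i k - (d : ℝ) ^ n / N) ^ 2 * A k j := by
  rw [w_succ h, ← adj_col h j]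
  apply Finset.sum_sq_le_sum_mul_sum_of_sq_le_mul
  · intro k _; exact adj_nonneg h k j
  · intro k _; exact mul_nonneg (sq_nonneg _) (adj_nonneg h k j)
  · intro k _; exact le_of_eq (by ring)

lemma norm_w_succ (h : IsAdjMat N d A) (n : ℕ) (i : Fin N) :
    ∑ j, ((A ^ (n + 1)) i j - (d : ℝ) ^ (n + 1) / N) ^ 2
      ≤ (d : ℝ) ^ 2 * ∑ j, ((A ^ n) i j - (d : ℝ) ^ n / N) ^ 2 := by
  refine (Finset.sum_le_sum fun j _ => w_succ_sq h n i j).trans (le_of_eq ?_)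
  rw [← Finset.mul_sum, Finset.sum_comm]
  simp_rw [← Finset.mul_sum, h.2.2.2, ← Finset.sum_mul]
  ring

lemma norm_w_add (h : IsAdjMat N d A) (m : ℕ) (i : Fin N) :
    ∑ j, ((A ^ (2 + m)) i j - (d : ℝ) ^ (2 + m) / N) ^ 2
      ≤ (d : ℝ) ^ (2 * m) * ∑ j, ((A ^ 2) i j - (d : ℝ) ^ 2 / N) ^ 2 := by
  induction m with
  | zero => simp
  | succ m ih =>
    refine (norm_w_succ h (2 + m) i).trans ?_
    calc _ ≤ (d : ℝ) ^ 2 * ((d : ℝ) ^ (2 * m) * ∑ j, ((A ^ 2) i j - (d : ℝ) ^ 2 / N) ^ 2) := by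
          gcongr
      _ = _ := by ring

def Xf (d : ℕ) (i : Fin N) (A : Matrix (Fin N) (Fin N) ℝ) : ℝ := (A ^ 4) i i - (d : ℝ) ^ 4 / N
def Vf (d : ℕ) (i j : Fin N) (A : Matrix (Fin N) (Fin N) ℝ) : ℝ := (A ^ 3) i j - (d : ℝ) ^ 3 / N

lemma Xf_nonneg (h : IsAdjMat N d A) (i : Fin N) : 0 ≤ Xf d i A := by
  have := norm_w h i.pos 2 i
  unfold Xf
  rw [show 4 = 2 * 2 by rfl, ← this]
  positivity

lemma pow_le_Xf (h : IsAdjMat N d A) (r : ℕ) (hr : 2 ≤ r) (i : Fin N) :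
    (A ^ (2 * r)) i i - (d : ℝ) ^ (2 * r) / N ≤ (d : ℝ) ^ (2 * (r - 2)) * Xf d i A := by
  obtain ⟨m, rfl⟩ := Nat.exists_eq_add_of_le hr
  rw [← norm_w h i.pos]
  have := norm_w_add h m i
  rw [norm_w h i.pos 2] at this
  simpa [Xf] using this

lemma Vf_sq (h : IsAdjMat N d A) (i j : Fin N) : Vf d i j A ^ 2 ≤ d * Xf d i A := by
  refine (w_succ_sq h 2 i j).trans ?_
  have := norm_w h i.pos 2 i
  rw [show (2 * 2) = 4 by rfl] at this
  unfold Xf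
  rw [← this]
  gcongr with k
  exact mul_le_of_le_one_right (sq_nonneg _) (adj_le_one h k j)

lemma Vf_abs (h : IsAdjMat N d A) (i j : Fin N) : |Vf d i j A| ≤ √(d * Xf d i A) :=
  Real.abs_le_sqrt (Vf_sq h i j)

lemma Vf_sum (h : IsAdjMat N d A) (i : Fin N) : ∑ j, Vf d i j A = 0 := by
  have hN' : (N : ℝ) ≠ 0 := by have := i.pos; positivity
  unfold Vf
  rw [Finset.sum_sub_distrib, adj_row_pow h]
  simp only [Finset.sum_const, Finset.card_univ, Fintype.card_fin, nsmul_eq_mul]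
  field_simp
  ring

lemma Vf_A_sum (h : IsAdjMat N d A) (i : Fin N) : ∑ j, A i j * Vf d i j A = Xf d i A := by
  have := w_succ h 3 i i
  unfold Xf
  rw [this]
  refine Finset.sum_congr rfl fun k _ => ?_
  rw [h.1.apply i k, mul_comm]; rfl

/-! ### perturbation -/

lemma pert_left (ξ B : Matrix (Fin N) (Fin N) ℝ) (c K : ℝ) (hξ : ∑ a, ∑ b, |ξ a b| ≤ K)
    (hc : 0 ≤ c) (i j : Fin N) (hB : ∀ a, |B a j| ≤ c) : |(ξ * B) i j| ≤ K * c := by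
  rw [Matrix.mul_apply]
  calc |∑ k, ξ i k * B k j| ≤ ∑ k, |ξ i k * B k j| := Finset.abs_sum_le_sum_abs _ _
    _ ≤ ∑ k, |ξ i k| * c := by
        refine Finset.sum_le_sum fun k _ => ?_
        rw [abs_mul]; gcongr; exact hB k
    _ = (∑ k, |ξ i k|) * c := by rw [Finset.sum_mul]
    _ ≤ (∑ a, ∑ b, |ξ a b|) * c := by
        refine mul_le_mul_of_nonneg_right ?_ hc
        exact Finset.single_le_sum (f := fun a => ∑ b, |ξ a b|)
          (fun a _ => Finset.sum_nonneg fun b _ => abs_nonneg _) (Finset.mem_univ i)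
    _ ≤ K * c := by gcongr

lemma pert_mid (C ξ B : Matrix (Fin N) (Fin N) ℝ) (c e K : ℝ) (hξ : ∑ a, ∑ b, |ξ a b| ≤ K)
    (hc : 0 ≤ c) (he : 0 ≤ e) (i j : Fin N) (hC : ∀ a, |C i a| ≤ e)
    (hB : ∀ a, |B a j| ≤ c) : |(C * ξ * B) i j| ≤ K * (e * c) := by
  rw [Matrix.mul_apply]
  simp_rw [Matrix.mul_apply, Finset.sum_mul]
  rw [Finset.sum_comm]
  calc |∑ a, ∑ b, C i a * ξ a b * B b j| ≤ ∑ a, ∑ b, |C i a * ξ a b * B b j| :=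
        (Finset.abs_sum_le_sum_abs _ _).trans
          (Finset.sum_le_sum fun a _ => Finset.abs_sum_le_sum_abs _ _)
    _ ≤ ∑ a, ∑ b, |ξ a b| * (e * c) := by
        refine Finset.sum_le_sum fun a _ => Finset.sum_le_sum fun b _ => ?_
        rw [abs_mul, abs_mul]
        calc |C i a| * |ξ a b| * |B b j| ≤ e * |ξ a b| * c := by
              gcongr
              · exact hC a
              · exact hB b
          _ = _ := by ring
    _ = (∑ a, ∑ b, |ξ a b|) * (e * c) := by simp_rw [Finset.sum_mul]
    _ ≤ K * (e * c) := by gcongr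

lemma pert_right (C ξ : Matrix (Fin N) (Fin N) ℝ) (e K : ℝ) (hξ : ∑ a, ∑ b, |ξ a b| ≤ K)
    (he : 0 ≤ e) (i j : Fin N) (hC : ∀ a, |C i a| ≤ e) : |(C * ξ) i j| ≤ K * e := by
  have := pert_mid C ξ 1 1 e K hξ zero_le_one he i j hC
    (by intro a; rw [Matrix.one_apply]; split_ifs <;> simp)
  simpa using this

variable {A' : Matrix (Fin N) (Fin N) ℝ}

lemma abs_pow_le (h : IsAdjMat N d A) (n : ℕ) (i j : Fin N) :
    |(A ^ (n + 1)) i j| ≤ (d : ℝ) ^ n := by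
  rw [abs_of_nonneg (adj_pow_nonneg h _ i j)]; exact adj_pow_le h n i j

lemma pert_cube (h : IsAdjMat N d A) (h' : IsAdjMat N d A') (hd : 1 ≤ d)
    (hξ : ∑ a, ∑ b, |(A' - A) a b| ≤ 8) (i j : Fin N) :
    |(A' ^ 3) i j - (A ^ 3) i j| ≤ 24 * d := by
  have hd' : (1 : ℝ) ≤ d := by exact_mod_cast hd
  have e : A' ^ 3 - A ^ 3 = (A' - A) * A' ^ 2 + A * (A' - A) * A' + A ^ 2 * (A' - A) := by
    noncomm_ring
  have e2 : (A' ^ 3) i j - (A ^ 3) i j = ((A' - A) * A' ^ 2) i j + (A * (A' - A) * A') i j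
      + (A ^ 2 * (A' - A)) i j := by
    rw [← Matrix.sub_apply, e]; rfl
  have b1 := pert_left (A' - A) (A' ^ 2) d 8 hξ (by positivity) i j
    (fun a => by simpa using abs_pow_le h' 1 a j)
  have b2 := pert_mid A (A' - A) A' 1 1 8 hξ (by positivity) (by positivity) i j
    (fun a => by simpa using abs_pow_le h 0 i a) (fun a => by simpa using abs_pow_le h' 0 a j)
  have b3 := pert_right (A ^ 2) (A' - A) d 8 hξ (by positivity) i j
    (fun a => by simpa using abs_pow_le h 1 i a)
  rw [e2]
  rw [abs_le] at *
  constructor <;> linarith [b1.1, b1.2, b2.1, b2.2, b3.1, b3.2]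

lemma pert_X (h : IsAdjMat N d A) (h' : IsAdjMat N d A') (hd : 1 ≤ d)
    (hξ : ∑ a, ∑ b, |(A' - A) a b| ≤ 8) (i : Fin N) :
    |Xf d i A' - Xf d i A| ≤ 16 * √(d * Xf d i A) + 208 * d := by
  have hd' : (1 : ℝ) ≤ d := by exact_mod_cast hd
  set J : Matrix (Fin N) (Fin N) ℝ := Matrix.of fun _ _ => (d : ℝ) ^ 3 / N with hJ
  have j1 : (A' - A) * J = 0 := by
    ext a b
    rw [Matrix.mul_apply]
    simp only [hJ, Matrix.of_apply, Matrix.sub_apply, Matrix.zero_apply]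
    rw [← Finset.sum_mul, Finset.sum_sub_distrib, h.2.2.2, h'.2.2.2]; simp
  have j2 : J * (A' - A) = 0 := by
    ext a b
    rw [Matrix.mul_apply]
    simp only [hJ, Matrix.of_apply, Matrix.sub_apply, Matrix.zero_apply]
    rw [← Finset.mul_sum, Finset.sum_sub_distrib, adj_col h, adj_col h']; simp
  have e : A' ^ 4 - A ^ 4 = (A' - A) * (A' ^ 3 - J) + A * (A' - A) * A' ^ 2
      + A ^ 2 * (A' - A) * A' + (A ^ 3 - J) * (A' - A) := by
    rw [mul_sub (A' - A), j1, sub_mul (A ^ 3) J, j2]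
    noncomm_ring
  have e2 : Xf d i A' - Xf d i A = ((A' - A) * (A' ^ 3 - J)) i i + (A * (A' - A) * A' ^ 2) i i
      + (A ^ 2 * (A' - A) * A') i i + ((A ^ 3 - J) * (A' - A)) i i := by
    have : Xf d i A' - Xf d i A = (A' ^ 4 - A ^ 4) i i := by
      rw [Matrix.sub_apply]; unfold Xf; ring
    rw [this, e]; rfl
  have b1 := pert_left (A' - A) (A' ^ 3 - J) (√(d * Xf d i A) + 24 * d) 8 hξ (by positivity) i i
    (fun a => by
      rw [Matrix.sub_apply, hJ, Matrix.of_apply, adj_pow_symm h' 3 a i]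
      have c1 := pert_cube h h' hd hξ i a
      have c2 := Vf_abs h i a
      unfold Vf at c2
      rw [abs_le] at *
      constructor <;> linarith [c1.1, c1.2, c2.1, c2.2])
  have b2 := pert_mid A (A' - A) (A' ^ 2) d 1 8 hξ (by positivity) (by positivity) i i
    (fun a => by simpa using abs_pow_le h 0 i a) (fun a => by simpa using abs_pow_le h' 1 a i)
  have b3 := pert_mid (A ^ 2) (A' - A) A' 1 d 8 hξ (by positivity) (by positivity) i i
    (fun a => by simpa using abs_pow_le h 1 i a) (fun a => by simpa using abs_pow_le h' 0 a i)
  have b4 := pert_right (A ^ 3 - J) (A' - A) (√(d * Xf d i A)) 8 hξ (by positivity) i i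
    (fun a => Vf_abs h i a)
  rw [e2]
  rw [abs_le] at *
  constructor <;> linarith [b1.1, b1.2, b2.1, b2.2, b3.1, b3.2, b4.1, b4.2]

lemma pert_main (h : IsAdjMat N d A) (h' : IsAdjMat N d A') (hd : 1 ≤ d)
    (hξ : ∑ a, ∑ b, |(A' - A) a b| ≤ 8) (i j : Fin N) (n : ℕ) :
    |Vf d i j A' * Xf d i A' ^ n - Vf d i j A * Xf d i A ^ n|
      ≤ (24 + 120 * n) * 217 ^ n * d * (Xf d i A + d) ^ n := by
  have hd' : (1 : ℝ) ≤ d := by exact_mod_cast hd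
  have hX := Xf_nonneg h i
  have hX' := Xf_nonneg h' i
  have p1 : |Vf d i j A' - Vf d i j A| ≤ 24 * d := by
    have := pert_cube h h' hd hξ i j
    unfold Vf
    rwa [sub_sub_sub_cancel_right]
  have p2 := pert_X h h' hd hξ i
  have p3 := Vf_abs h i j
  set X := Xf d i A
  set X' := Xf d i A'
  set s := √(d * X) with hs
  have hs0 : 0 ≤ s := Real.sqrt_nonneg _
  have hs2 : s ^ 2 = d * X := Real.sq_sqrt (by positivity)
  have hs1 : s ≤ (X + d) / 2 := by
    apply Real.sqrt_le_iff.2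
    constructor
    · positivity
    · nlinarith [sq_nonneg (X - d)]
  set Y := X + d with hY
  have hY0 : 0 ≤ Y := by positivity
  have hXY : X ≤ 217 * Y := by linarith
  have hXY' : X' ≤ 217 * Y := by
    have := (abs_le.1 p2).2
    linarith
  have p4 : |X' ^ n - X ^ n| ≤ |X' - X| * n * (217 * Y) ^ (n - 1) := by
    refine (abs_pow_sub_pow_le X' X n).trans ?_
    gcongr
    rw [abs_of_nonneg hX, abs_of_nonneg hX']
    exact max_le hXY' hXY
  have p5 : |Vf d i j A| * |X' - X| ≤ 120 * d * Y := by
    calc |Vf d i j A| * |X' - X| ≤ s * (16 * s + 208 * d) := by gcongr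
      _ = 16 * (d * X) + 208 * d * s := by rw [← hs2]; ring
      _ ≤ 16 * (d * Y) + 208 * d * (Y / 2) := by gcongr; linarith
      _ = _ := by ring
  have p6 : |Vf d i j A| * |X' ^ n - X ^ n| ≤ 120 * n * 217 ^ n * d * Y ^ n := by
    rcases n with _ | n
    · simp
    · calc |Vf d i j A| * |X' ^ (n+1) - X ^ (n+1)|
          ≤ |Vf d i j A| * (|X' - X| * (n + 1 : ℕ) * (217 * Y) ^ n) := by
            gcongr; simpa using p4
        _ = (|Vf d i j A| * |X' - X|) * ((n + 1 : ℕ) * (217 * Y) ^ n) := by ring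
        _ ≤ (120 * d * Y) * ((n + 1 : ℕ) * (217 * Y) ^ n) := by gcongr
        _ = 120 * (n + 1 : ℕ) * 217 ^ n * d * Y ^ (n + 1) := by rw [mul_pow]; ring
        _ ≤ _ := by gcongr <;> norm_num
  have p7 : |Vf d i j A' - Vf d i j A| * X' ^ n ≤ 24 * 217 ^ n * d * Y ^ n := by
    calc _ ≤ 24 * d * (217 * Y) ^ n := by gcongr
      _ = _ := by rw [mul_pow]; ring
  calc _ = |(Vf d i j A' - Vf d i j A) * X' ^ n + Vf d i j A * (X' ^ n - X ^ n)| := by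
        congr 1; ring
    _ ≤ |Vf d i j A' - Vf d i j A| * X' ^ n + |Vf d i j A| * |X' ^ n - X ^ n| := by
        refine (abs_add_le _ _).trans ?_
        rw [abs_mul, abs_mul, abs_of_nonneg (pow_nonneg hX' n)]
    _ ≤ _ := by linarith
/-! ### switching -/

def dl (a b : Fin N) : ℝ := if a = b then 1 else 0

def xiS (i j k l : Fin N) : Matrix (Fin N) (Fin N) ℝ :=
  Matrix.of fun a b => (dl a i - dl a l) * (dl b j - dl b k) + (dl a j - dl a k) * (dl b i - dl b l)

def Sw (A : Matrix (Fin N) (Fin N) ℝ) (i j k l : Fin N) : ℝ :=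
  A i j * A k l * (1 - (A i k + dl i k)) * (1 - (A j l + dl j l))

lemma xiS_neg (i j k l : Fin N) : xiS i k j l = - xiS i j k l := by
  ext a b; simp [xiS]; ring

lemma dl_sum (i : Fin N) : ∑ a, dl a i = 1 := by simp [dl]

lemma dl_sum' (i : Fin N) : ∑ a, dl i a = 1 := by simp [dl]

lemma dl_abs_sum (i l : Fin N) : ∑ a, |dl a i - dl a l| ≤ 2 := by
  calc ∑ a, |dl a i - dl a l| ≤ ∑ a, (dl a i + dl a l) := by
        refine Finset.sum_le_sum fun a _ => ?_
        unfold dl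
        split_ifs <;> norm_num
    _ = 2 := by rw [Finset.sum_add_distrib, dl_sum, dl_sum]; norm_num

lemma xiS_abs_sum (i j k l : Fin N) : ∑ a, ∑ b, |xiS i j k l a b| ≤ 8 := by
  calc ∑ a, ∑ b, |xiS i j k l a b|
      ≤ ∑ a, ∑ b, (|dl a i - dl a l| * |dl b j - dl b k| + |dl a j - dl a k| * |dl b i - dl b l|) := by
        refine Finset.sum_le_sum fun a _ => Finset.sum_le_sum fun b _ => ?_
        simp only [xiS, Matrix.of_apply]
        refine (abs_add_le _ _).trans ?_
        rw [abs_mul, abs_mul]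
    _ = (∑ a, |dl a i - dl a l|) * (∑ b, |dl b j - dl b k|)
        + (∑ a, |dl a j - dl a k|) * (∑ b, |dl b i - dl b l|) := by
        simp_rw [Finset.sum_add_distrib, ← Finset.mul_sum, ← Finset.sum_mul]
    _ ≤ 2 * 2 + 2 * 2 := by
        gcongr <;> apply dl_abs_sum
    _ = 8 := by norm_num

lemma Sw_ne (h : IsAdjMat N d A) {i j k l : Fin N} (hs : Sw A i j k l ≠ 0) :
    A i j = 1 ∧ A k l = 1 ∧ A i k = 0 ∧ A j l = 0 ∧ i ≠ k ∧ j ≠ l ∧ i ≠ j ∧ k ≠ l ∧ i ≠ l ∧ j ≠ k := by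
  obtain ⟨h1, h2, h3, -⟩ := h
  unfold Sw at hs
  have a1 : A i j = 1 := (h3 i j).resolve_left (fun e => hs (by simp [e]))
  have a2 : A k l = 1 := (h3 k l).resolve_left (fun e => hs (by simp [e]))
  have n1 : i ≠ k := fun e => hs (by subst e; simp [h2, dl])
  have n2 : j ≠ l := fun e => hs (by subst e; simp [h2, dl])
  have a3 : A i k = 0 := (h3 i k).resolve_right (fun e => hs (by simp [e, dl, n1]))
  have a4 : A j l = 0 := (h3 j l).resolve_right (fun e => hs (by simp [e, dl, n2]))
  refine ⟨a1, a2, a3, a4, n1, n2, ?_, ?_, ?_, ?_⟩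
  · rintro rfl; rw [h2] at a1; norm_num at a1
  · rintro rfl; rw [h2] at a2; norm_num at a2
  · rintro rfl; rw [h1.apply, a3] at a2; norm_num at a2
  · rintro rfl; rw [a1] at a3; norm_num at a3

lemma Sw_eq_one (h : IsAdjMat N d A) {i j k l : Fin N} (hs : Sw A i j k l ≠ 0) :
    Sw A i j k l = 1 := by
  obtain ⟨a1, a2, a3, a4, n1, n2, -⟩ := Sw_ne h hs
  simp [Sw, a1, a2, a3, a4, dl, n1, n2]

lemma Sw_nonneg (h : IsAdjMat N d A) (i j k l : Fin N) : 0 ≤ Sw A i j k l := by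
  by_cases hs : Sw A i j k l = 0
  · rw [hs]
  · rw [Sw_eq_one h hs]; norm_num

lemma Sw_le (h : IsAdjMat N d A) (i j k l : Fin N) : Sw A i j k l ≤ A i j * A k l := by
  by_cases hs : Sw A i j k l = 0
  · rw [hs]; exact mul_nonneg (adj_nonneg h _ _) (adj_nonneg h _ _)
  · obtain ⟨a1, a2, -⟩ := Sw_ne h hs
    rw [Sw_eq_one h hs, a1, a2]; norm_num

lemma sw_adj (h : IsAdjMat N d A) {i j k l : Fin N} (hs : Sw A i k j l ≠ 0) :
    IsAdjMat N d (A + xiS i j k l) ∧ Sw (A + xiS i j k l) i j k l = 1 := by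
  obtain ⟨a1, a2, a3, a4, n1, n2, n3, n4, n5, n6⟩ := Sw_ne h hs
  obtain ⟨h1, h2, h3, h4⟩ := h
  have b1 : A k i = 1 := by rw [h1.apply, a1]
  have b2 : A l j = 1 := by rw [h1.apply, a2]
  have b3 : A j i = 0 := by rw [h1.apply, a3]
  have b4 : A l k = 0 := by rw [h1.apply, a4]
  refine ⟨⟨?_, ?_, ?_, ?_⟩, ?_⟩
  · ext a b
    simp only [Matrix.transpose_apply, Matrix.add_apply, xiS, Matrix.of_apply]
    rw [h1.apply]; ring
  · intro a
    simp only [Matrix.add_apply, xiS, Matrix.of_apply, h2, dl]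
    grind
  · intro a b
    have := h3 a b
    simp only [Matrix.add_apply, xiS, Matrix.of_apply, dl]
    by_cases ai : a = i
    · subst ai
      simp [*]
      by_cases bj : b = j
      · subst bj; simp [*, Ne.symm n5, Ne.symm n6]
      · by_cases bk : b = k
        · subst bk; simp [*, Ne.symm n5, Ne.symm n6]
        · simp [*]
    by_cases aj : a = j
    · subst aj
      simp [*]
      by_cases bj : b = i
      · subst bj; simp [*, Ne.symm n5, Ne.symm n6]
      · by_cases bk : b = l
        · subst bk; simp [*, Ne.symm n5, Ne.symm n6]
        · simp [*]
    by_cases ak : a = k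
    · subst ak
      simp [*]
      by_cases bj : b = i
      · subst bj; simp [*, Ne.symm n5, Ne.symm n6]
      · by_cases bk : b = l
        · subst bk; simp [*, Ne.symm n5, Ne.symm n6]
        · simp [*]
    by_cases al : a = l
    · subst al
      simp [*]
      by_cases bj : b = j
      · subst bj; simp [*, Ne.symm n5, Ne.symm n6]
      · by_cases bk : b = k
        · subst bk; simp [*, Ne.symm n5, Ne.symm n6]
        · simp [*]
    simp [*]
  · intro a
    simp only [Matrix.add_apply, xiS, Matrix.of_apply]
    rw [Finset.sum_add_distrib, h4, Finset.sum_add_distrib, ← Finset.mul_sum, ← Finset.mul_sum,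
      Finset.sum_sub_distrib, Finset.sum_sub_distrib]
    simp [dl_sum]
  · simp only [Sw, Matrix.add_apply, xiS, Matrix.of_apply, dl]
    simp [*, Ne.symm n1, Ne.symm n2, Ne.symm n3, Ne.symm n4, Ne.symm n5, Ne.symm n6]

lemma Om_finite (N d : ℕ) : {A : Matrix (Fin N) (Fin N) ℝ | IsAdjMat N d A}.Finite := by
  have : (Set.pi Set.univ fun _ : Fin N => Set.pi Set.univ fun _ : Fin N =>
      ({0, 1} : Set ℝ)).Finite :=
    Set.Finite.pi fun _ => Set.Finite.pi fun _ => by simp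
  refine this.subset fun A hA => ?_
  intro i _ j _
  exact hA.2.2.1 i j

def Om (N d : ℕ) : Finset (Matrix (Fin N) (Fin N) ℝ) := (Om_finite N d).toFinset

lemma mem_Om : A ∈ Om N d ↔ IsAdjMat N d A := by simp [Om]

lemma switch_sum (F : Matrix (Fin N) (Fin N) ℝ → ℝ) (i j k l : Fin N) :
    ∑ A ∈ Om N d, Sw A i j k l * F A = ∑ A ∈ Om N d, Sw A i k j l * F (A + xiS i j k l) := by
  classical
  symm
  refine Finset.sum_bij_ne_zero (fun A _ _ => A + xiS i j k l) ?_ ?_ ?_ ?_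
  · intro A hA hs
    exact mem_Om.2 (sw_adj (mem_Om.1 hA) (left_ne_zero_of_mul hs)).1
  · intro A hA hs B hB hs' e
    exact add_right_cancel e
  · intro B hB hs
    have hs' := left_ne_zero_of_mul hs
    obtain ⟨c1, c2⟩ := sw_adj (mem_Om.1 hB) hs'
    have e : B + xiS i k j l + xiS i j k l = B := by rw [xiS_neg]; simp
    refine ⟨B + xiS i k j l, mem_Om.2 c1, ?_, e⟩
    rw [e, c2, one_mul]
    exact right_ne_zero_of_mul hs
  · intro A hA hs
    have hs' := left_ne_zero_of_mul hs
    rw [(sw_adj (mem_Om.1 hA) hs').2, Sw_eq_one (mem_Om.1 hA) hs']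

lemma AMA (h : IsAdjMat N d A) (i j : Fin N) :
    ∑ k, ∑ l, A i k * A j l * (A k l + dl k l) = (A ^ 3) i j + (A ^ 2) i j := by
  have e3 : (A ^ 3) i j = ∑ k, ∑ l, A i k * A j l * A k l := by
    rw [pow_succ, pow_two, Matrix.mul_apply]
    simp_rw [Matrix.mul_apply, Finset.sum_mul]
    rw [Finset.sum_comm]
    refine Finset.sum_congr rfl fun k _ => Finset.sum_congr rfl fun l _ => ?_
    rw [h.1.apply j l]; ring
  have e2 : (A ^ 2) i j = ∑ k, ∑ l, A i k * A j l * dl k l := by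
    rw [pow_two, Matrix.mul_apply]
    refine Finset.sum_congr rfl fun k _ => ?_
    simp [dl, h.1.apply j k]
  rw [e3, e2, ← Finset.sum_add_distrib]
  refine Finset.sum_congr rfl fun k _ => ?_
  rw [← Finset.sum_add_distrib]
  refine Finset.sum_congr rfl fun l _ => ?_
  ring

lemma sum_b (h : IsAdjMat N d A) (i j : Fin N) :
    ∑ k, ∑ l, Sw A i k j l
      = (1 - (A i j + dl i j)) * ((d : ℝ) ^ 2 - ((A ^ 3) i j + (A ^ 2) i j)) := by
  have e0 : (d : ℝ) ^ 2 = ∑ k, ∑ l, A i k * A j l := by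
    simp_rw [← Finset.mul_sum, h.2.2.2, ← Finset.sum_mul, h.2.2.2]; ring
  rw [← AMA h, e0, ← Finset.sum_sub_distrib, Finset.mul_sum]
  refine Finset.sum_congr rfl fun k _ => ?_
  rw [← Finset.sum_sub_distrib, Finset.mul_sum]
  refine Finset.sum_congr rfl fun l _ => ?_
  unfold Sw; ring

lemma dl_symm (i j : Fin N) : dl i j = dl j i := by unfold dl; simp [eq_comm]

lemma sum_a (h : IsAdjMat N d A) (i j : Fin N) :
    ∑ k, ∑ l, Sw A i j k l
      = A i j * ((N : ℝ) * d - 2 * (d + 1) * d + (A ^ 3) i j + 2 * (A ^ 2) i j + A i j) := by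
  have e0 : (N : ℝ) * d = ∑ k, ∑ l, A k l := by
    simp [h.2.2.2]
  have e1 : ((d : ℝ) + 1) * d = ∑ k, ∑ l, A k l * (A i k + dl i k) := by
    simp_rw [← Finset.sum_mul, h.2.2.2, ← Finset.mul_sum, Finset.sum_add_distrib, h.2.2.2, dl_sum']
    ring
  have e2 : ((d : ℝ) + 1) * d = ∑ k, ∑ l, A k l * (A j l + dl j l) := by
    rw [Finset.sum_comm]
    simp_rw [← Finset.sum_mul, adj_col h, ← Finset.mul_sum, Finset.sum_add_distrib, h.2.2.2, dl_sum']
    ring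
  have e3 : ∑ k, ∑ l, (A i k + dl i k) * A k l * dl j l = (A ^ 2) i j + A i j := by
    simp only [dl, mul_ite, mul_one, mul_zero, Finset.sum_ite_eq, Finset.mem_univ, if_true]
    simp_rw [add_mul, Finset.sum_add_distrib]
    rw [pow_two, Matrix.mul_apply]
    simp
  have e4 : ∑ k, ∑ l, dl i k * A k l * A j l = (A ^ 2) i j := by
    rw [Finset.sum_comm]
    simp only [dl, ite_mul, one_mul, zero_mul, Finset.sum_ite_eq, Finset.mem_univ, if_true]
    rw [pow_two, Matrix.mul_apply]
    exact Finset.sum_congr rfl fun k _ => by rw [h.1.apply j k]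
  have e5 : ∑ k, ∑ l, A i k * A k l * A j l = (A ^ 3) i j := by
    rw [pow_succ, pow_two, Matrix.mul_apply]
    simp_rw [Matrix.mul_apply, Finset.sum_mul]
    rw [Finset.sum_comm]
    refine Finset.sum_congr rfl fun k _ => Finset.sum_congr rfl fun l _ => ?_
    rw [h.1.apply j k]
  have e6 : (N : ℝ) * d - 2 * (d + 1) * d + (A ^ 3) i j + 2 * (A ^ 2) i j + A i j
     = N * d - (d + 1) * d - (d + 1) * d + ((A ^ 2) i j + A i j) + (A ^ 2) i j + (A ^ 3) i j := by
    ring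
  rw [e6]
  nth_rewrite 1 [e1]
  rw [e2, e0, ← e3, ← e4, ← e5]
  simp only [← Finset.sum_sub_distrib, ← Finset.sum_add_distrib, Finset.mul_sum]
  refine Finset.sum_congr rfl fun k _ => ?_
  refine Finset.sum_congr rfl fun l _ => ?_
  unfold Sw; ring
/-! ### moment recursion -/

def Rf (d : ℕ) (i j : Fin N) (A : Matrix (Fin N) (Fin N) ℝ) : ℝ :=
  A i j * (2 * d - 1 - (A ^ 2) i j) - (A ^ 2) i j
    - dl i j * ((d : ℝ) ^ 2 - ((A ^ 3) i j + (A ^ 2) i j))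

lemma sum_ab (h : IsAdjMat N d A) (i j : Fin N) :
    ∑ k, ∑ l, Sw A i j k l - ∑ k, ∑ l, Sw A i k j l
      = (d : ℝ) * (N - d) * (A i j - d / N) + Vf d i j A - Rf d i j A := by
  have hN' : (N : ℝ) ≠ 0 := by have := i.pos; positivity
  rw [sum_a h, sum_b h]
  unfold Vf Rf
  have hsq : A i j * A i j = A i j := by rcases h.2.2.1 i j with e | e <;> simp [e]
  have e1 : (d : ℝ) * (N - d) * (A i j - d / N) = d * (N - d) * A i j - d ^ 2 + d ^ 3 / N := by
    field_simp; ring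
  rw [e1]
  linear_combination hsq

lemma Rf_sum (h : IsAdjMat N d A) (hd : 1 ≤ d) (i : Fin N) :
    ∑ j, |Rf d i j A| ≤ 4 * (d : ℝ) ^ 2 := by
  have hd' : (1 : ℝ) ≤ d := by exact_mod_cast hd
  have key : ∀ j, |Rf d i j A| ≤ A i j * (2 * d) + (A ^ 2) i j + dl i j * (d : ℝ) ^ 2 := by
    intro j
    have q0 := adj_nonneg h i j
    have q1 := adj_pow_nonneg h 2 i j
    have q2 := adj_pow_nonneg h 3 i j
    have q3 : (A ^ 2) i j ≤ d := by simpa using adj_pow_le h 1 i j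
    have q4 := adj_pow_le h 2 i j
    norm_num at q4
    have q5 : 0 ≤ dl i j := by unfold dl; split_ifs <;> norm_num
    have z1 : |A i j * (2 * d - 1 - (A ^ 2) i j)| ≤ A i j * (2 * d) := by
      rw [abs_mul, abs_of_nonneg q0]
      gcongr
      rw [abs_le]; constructor <;> linarith
    have z2 : |dl i j * ((d : ℝ) ^ 2 - ((A ^ 3) i j + (A ^ 2) i j))| ≤ dl i j * (d : ℝ) ^ 2 := by
      rw [abs_mul, abs_of_nonneg q5]
      gcongr
      rw [abs_le]; constructor <;> nlinarith
    unfold Rf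
    rw [abs_le] at *
    constructor <;> linarith [z1.1, z1.2, z2.1, z2.2]
  refine (Finset.sum_le_sum fun j _ => key j).trans (le_of_eq ?_)
  rw [Finset.sum_add_distrib, Finset.sum_add_distrib, ← Finset.sum_mul, ← Finset.sum_mul, h.2.2.2,
    adj_row_pow h, dl_sum']
  ring

def Cn (n : ℕ) : ℝ := (24 + 120 * n) * 217 ^ n

lemma Cn_nonneg (n : ℕ) : 0 ≤ Cn n := by unfold Cn; positivity

lemma switch_total (hd : 1 ≤ d) (i : Fin N) (n : ℕ) :
    ∑ A ∈ Om N d, ∑ j, ((d : ℝ) * (N - d) * (A i j - d / N) + Vf d i j A - Rf d i j A)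
        * (Vf d i j A * Xf d i A ^ n)
      ≤ ∑ A ∈ Om N d, (N * (d : ℝ) ^ 2) * (Cn n * d * (Xf d i A + d) ^ n) := by
  have e1 : ∑ A ∈ Om N d, ∑ j, ((d : ℝ) * (N - d) * (A i j - d / N) + Vf d i j A - Rf d i j A)
        * (Vf d i j A * Xf d i A ^ n)
      = ∑ A ∈ Om N d, ∑ j, ∑ k, ∑ l, Sw A i k j l *
        (Vf d i j (A + xiS i j k l) * Xf d i (A + xiS i j k l) ^ n - Vf d i j A * Xf d i A ^ n) := by
    have s1 : ∀ j, ∑ A ∈ Om N d, (∑ k, ∑ l, Sw A i j k l) * (Vf d i j A * Xf d i A ^ n)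
        = ∑ A ∈ Om N d, ∑ k, ∑ l, Sw A i k j l *
          (Vf d i j (A + xiS i j k l) * Xf d i (A + xiS i j k l) ^ n) := by
      intro j
      simp_rw [Finset.sum_mul]
      rw [Finset.sum_comm, Finset.sum_comm (s := Om N d)]
      refine Finset.sum_congr rfl fun k _ => ?_
      rw [Finset.sum_comm, Finset.sum_comm (s := Om N d)]
      refine Finset.sum_congr rfl fun l _ => ?_
      exact switch_sum (fun A => Vf d i j A * Xf d i A ^ n) i j k l
    rw [Finset.sum_comm, Finset.sum_comm (s := Om N d)]
    refine Finset.sum_congr rfl fun j _ => ?_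
    simp_rw [mul_sub (Sw _ _ _ _ _), Finset.sum_sub_distrib]
    rw [← s1 j, ← Finset.sum_sub_distrib]
    refine Finset.sum_congr rfl fun A hA => ?_
    rw [← sum_ab (mem_Om.1 hA), sub_mul]
    simp_rw [Finset.sum_mul]
  rw [e1]
  refine Finset.sum_le_sum fun A hA => ?_
  have h := mem_Om.1 hA
  have hX := Xf_nonneg h i
  have hc := Cn_nonneg n
  have e2 : (N : ℝ) * (d : ℝ) ^ 2 = ∑ j, ∑ k, ∑ l, A i k * A j l := by
    simp_rw [← Finset.mul_sum, h.2.2.2, ← Finset.sum_mul, h.2.2.2]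
    simp only [Finset.sum_const, Finset.card_univ, Fintype.card_fin, nsmul_eq_mul]
    ring
  rw [e2]
  simp_rw [Finset.sum_mul]
  refine Finset.sum_le_sum fun j _ => Finset.sum_le_sum fun k _ => Finset.sum_le_sum fun l _ => ?_
  by_cases hs : Sw A i k j l = 0
  · rw [hs, zero_mul]
    have := adj_nonneg h i k
    have := adj_nonneg h j l
    positivity
  · have h' := (sw_adj h hs).1
    refine mul_le_mul (Sw_le h i k j l) ?_ ?_ ?_ |>.trans' (mul_le_mul_of_nonneg_left (le_abs_self _) (Sw_nonneg h _ _ _ _))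
    · refine pert_main h h' hd ?_ i j n
      simpa using xiS_abs_sum i j k l
    · exact abs_nonneg _
    · exact mul_nonneg (adj_nonneg h i k) (adj_nonneg h j l)

lemma lower (h : IsAdjMat N d A) (hd : 1 ≤ d) (hN : 2 * d ≤ N) (i : Fin N) (n : ℕ) :
    (N : ℝ) * d * (Xf d i A ^ (n + 1) / 4 - 4 * (d : ℝ) ^ 2 * (Xf d i A + d) ^ n)
      ≤ ∑ j, ((d : ℝ) * (N - d) * (A i j - d / N) + Vf d i j A - Rf d i j A)
        * (Vf d i j A * Xf d i A ^ n) := by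
  have hd' : (1 : ℝ) ≤ d := by exact_mod_cast hd
  have hN' : 2 * (d : ℝ) ≤ N := by exact_mod_cast hN
  have hX := Xf_nonneg h i
  have hs := Vf_abs h i
  have hR := Rf_sum h hd i
  have hV := Vf_sum h i
  have hVA := Vf_A_sum h i
  set X := Xf d i A
  have hs0 : 0 ≤ √(d * X) := Real.sqrt_nonneg _
  have hs1 : 2 * √(d * X) ≤ X / 4 + 4 * d := by
    have : √(d * X) ≤ X / 8 + 2 * d := by
      apply Real.sqrt_le_iff.2
      constructor
      · positivity
      · nlinarith [sq_nonneg (X / 8 - 2 * d)]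
    linarith
  have e : ∑ j, ((d : ℝ) * (N - d) * (A i j - d / N) + Vf d i j A - Rf d i j A)
        * (Vf d i j A * X ^ n)
      = (d * (N - d) * X + ∑ j, Vf d i j A ^ 2 - ∑ j, Rf d i j A * Vf d i j A) * X ^ n := by
    have : ∀ j, ((d : ℝ) * (N - d) * (A i j - d / N) + Vf d i j A - Rf d i j A)
        * (Vf d i j A * X ^ n) = (d * (N - d) * (A i j * Vf d i j A)
          - d * (N - d) * (d / N) * Vf d i j A + Vf d i j A ^ 2 - Rf d i j A * Vf d i j A) * X ^ n := by
      intro j; ring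
    simp_rw [this]
    rw [← Finset.sum_mul, Finset.sum_sub_distrib, Finset.sum_add_distrib, Finset.sum_sub_distrib,
      ← Finset.mul_sum, ← Finset.mul_sum, hV, hVA]
    ring
  rw [e]
  have r1 : ∑ j, Rf d i j A * Vf d i j A ≤ 4 * (d : ℝ) ^ 2 * √(d * X) := by
    calc ∑ j, Rf d i j A * Vf d i j A ≤ ∑ j, |Rf d i j A| * √(d * X) := by
          refine Finset.sum_le_sum fun j _ => ?_
          refine (le_abs_self _).trans ?_
          rw [abs_mul]
          gcongr
          exact hs j
      _ = (∑ j, |Rf d i j A|) * √(d * X) := by rw [Finset.sum_mul]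
      _ ≤ _ := by gcongr
  have r2 : 0 ≤ ∑ j, Vf d i j A ^ 2 := Finset.sum_nonneg fun j _ => sq_nonneg _
  have r3 : 4 * (d : ℝ) ^ 2 * √(d * X) ≤ N * d * (X / 4 + 4 * d) := by
    calc 4 * (d : ℝ) ^ 2 * √(d * X) = (2 * d) * d * (2 * √(d * X)) := by ring
      _ ≤ N * d * (X / 4 + 4 * d) := by gcongr
  have r4 : N * d * (X / 2) ≤ d * (N - d) * X := by
    have : 0 ≤ (d : ℝ) * X := by positivity
    nlinarith
  have r5 : (N : ℝ) * d * (X / 4 - 4 * d) ≤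
      d * (N - d) * X + ∑ j, Vf d i j A ^ 2 - ∑ j, Rf d i j A * Vf d i j A := by
    linarith
  refine le_trans ?_ (mul_le_mul_of_nonneg_right r5 (pow_nonneg hX n))
  rw [mul_assoc ((N : ℝ) * d)]
  refine mul_le_mul_of_nonneg_left ?_ (by positivity)
  have r6 : 4 * (d : ℝ) * X ^ n ≤ 4 * (d : ℝ) ^ 2 * (X + d) ^ n := by
    gcongr
    · nlinarith
    · linarith
  calc _ ≤ X ^ (n + 1) / 4 - 4 * d * X ^ n := by linarith
    _ = _ := by ring

lemma recursion (hd : 1 ≤ d) (hN : 2 * d ≤ N) (i : Fin N) (n : ℕ) :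
    ∑ A ∈ Om N d, (Xf d i A + d) ^ (n + 1)
      ≤ 2 ^ n * (4 * Cn n + 17) * (d : ℝ) ^ 2 * ∑ A ∈ Om N d, (Xf d i A + d) ^ n := by
  have hd' : (1 : ℝ) ≤ d := by exact_mod_cast hd
  have hN' : 2 * (d : ℝ) ≤ N := by exact_mod_cast hN
  have a1 := (Finset.sum_le_sum fun A hA => lower (mem_Om.1 hA) hd hN i n).trans
    (switch_total hd i n)
  rw [← Finset.mul_sum, Finset.sum_sub_distrib, ← Finset.sum_div, ← Finset.mul_sum,
    ← Finset.mul_sum, ← Finset.mul_sum] at a1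
  have a2 : (∑ A ∈ Om N d, (Xf d i A + d) ^ (n + 1))
      ≤ 2 ^ n * (∑ A ∈ Om N d, Xf d i A ^ (n + 1))
        + 2 ^ n * (d : ℝ) ^ 2 * ∑ A ∈ Om N d, (Xf d i A + d) ^ n := by
    rw [Finset.mul_sum, Finset.mul_sum, ← Finset.sum_add_distrib]
    refine Finset.sum_le_sum fun A hA => ?_
    have hX := Xf_nonneg (mem_Om.1 hA) i
    have := add_pow_le hX (by positivity : (0 : ℝ) ≤ d) (n + 1)
    simp only [Nat.add_sub_cancel] at this
    have q : (d : ℝ) ^ (n + 1) ≤ (d : ℝ) ^ 2 * (Xf d i A + d) ^ n := by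
      rw [pow_succ']
      gcongr
      · nlinarith
      · linarith
    calc _ ≤ _ := this
      _ ≤ 2 ^ n * (Xf d i A ^ (n + 1) + (d : ℝ) ^ 2 * (Xf d i A + d) ^ n) := by gcongr
      _ = _ := by ring
  set P := ∑ A ∈ Om N d, Xf d i A ^ (n + 1)
  set Q := ∑ A ∈ Om N d, (Xf d i A + d) ^ n
  have a3 : P / 4 - 4 * (d : ℝ) ^ 2 * Q ≤ Cn n * d ^ 2 * Q := by
    have : 0 < (N : ℝ) * d := by
      have : (0 : ℝ) < N := by linarith
      positivity
    refine le_of_mul_le_mul_left (a1.trans (le_of_eq ?_)) this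
    ring
  calc _ ≤ _ := a2
    _ ≤ 2 ^ n * (4 * (Cn n * d ^ 2 * Q + 4 * (d : ℝ) ^ 2 * Q)) + 2 ^ n * (d : ℝ) ^ 2 * Q := by
        gcongr; linarith
    _ = _ := by ring

lemma moments (n : ℕ) : ∃ K : ℝ, 0 ≤ K ∧ ∀ N d : ℕ, 1 ≤ d → 2 * d ≤ N → ∀ i : Fin N,
    ∑ A ∈ Om N d, (Xf d i A + d) ^ n ≤ K * ((d : ℝ) ^ 2) ^ n * (Om N d).card := by
  induction n with
  | zero => exact ⟨1, zero_le_one, fun N d _ _ i => by simp⟩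
  | succ n ih =>
    obtain ⟨K, hK, ih⟩ := ih
    have hc := Cn_nonneg n
    refine ⟨2 ^ n * (4 * Cn n + 17) * K, by positivity, fun N d hd hN i => ?_⟩
    refine (recursion hd hN i n).trans ?_
    calc _ ≤ 2 ^ n * (4 * Cn n + 17) * (d : ℝ) ^ 2 * (K * ((d : ℝ) ^ 2) ^ n * (Om N d).card) := by
          gcongr; exact ih N d hd hN i
      _ = _ := by ring

lemma PrReg_le {N d : ℕ} (E : Matrix (Fin N) (Fin N) ℝ → Prop)
    (G : Matrix (Fin N) (Fin N) ℝ → ℝ) (t M : ℝ) (ht : 0 < t) (hM : 0 ≤ M)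
    (hG : ∀ A, IsAdjMat N d A → 0 ≤ G A)
    (hE : ∀ A, IsAdjMat N d A → E A → t ≤ G A)
    (hs : ∑ A ∈ Om N d, G A ≤ M * (Om N d).card) : PrReg N d E ≤ M / t := by
  classical
  have c1 : Nat.card {A : Matrix (Fin N) (Fin N) ℝ // IsAdjMat N d A} = (Om N d).card :=
    Nat.subtype_card _ fun A => mem_Om
  have c2 : Nat.card {A : Matrix (Fin N) (Fin N) ℝ // IsAdjMat N d A ∧ E A}
      = ((Om N d).filter E).card :=
    Nat.subtype_card _ fun A => by rw [Finset.mem_filter, mem_Om]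
  unfold PrReg
  rw [c1, c2]
  have b : (((Om N d).filter E).card : ℝ) * t ≤ M * (Om N d).card := by
    refine le_trans ?_ hs
    calc (((Om N d).filter E).card : ℝ) * t = ∑ A ∈ (Om N d).filter E, t := by
          rw [Finset.sum_const, nsmul_eq_mul]
      _ ≤ ∑ A ∈ (Om N d).filter E, G A := Finset.sum_le_sum fun A hA => by
          rw [Finset.mem_filter, mem_Om] at hA
          exact hE A hA.1 hA.2
      _ ≤ ∑ A ∈ Om N d, G A :=
          Finset.sum_le_sum_of_subset_of_nonneg (Finset.filter_subset _ _)
            fun A hA _ => hG A (mem_Om.1 hA)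
  rcases Nat.eq_zero_or_pos (Om N d).card with h0 | h0
  · rw [h0]; simp only [Nat.cast_zero, div_zero]; positivity
  · rw [div_le_div_iff₀ (by exact_mod_cast h0) ht]
    exact b

end Helpers

/-- Large deviation estimate for the diagonal entries of even powers of `𝒜`, together with
the deterministic nonnegativity of `(𝒜^{2r})_{ii} - d^{2r}/N`. -/
theorem power_diagonal_large_deviation
    (r : ℕ) (hr : 2 ≤ r) (ε D : ℝ) (hε : 0 < ε) (hD : 0 < D) :
    (∀ N d : ℕ, 1 ≤ d → 2 * d ≤ N → ∀ A : Matrix (Fin N) (Fin N) ℝ, IsAdjMat N d A →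
      ∀ i, 0 ≤ (A ^ (2 * r)) i i - (d : ℝ) ^ (2 * r) / (N : ℝ)) ∧
    ∃ N₀ : ℕ, ∀ N, N₀ ≤ N → ∀ d : ℕ, 1 ≤ d → 2 * d ≤ N → Even (d * N) → ∀ i : Fin N,
      PrReg N d (fun A =>
        (N : ℝ) ^ ε * (d : ℝ) ^ (2 * r - 2) ≤
          (A ^ (2 * r)) i i - (d : ℝ) ^ (2 * r) / (N : ℝ)) ≤
        (N : ℝ) ^ (-D) := by
  refine ⟨fun N d hd hN A h i => ?_, ?_⟩
  · rw [← norm_w h i.pos]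
    exact Finset.sum_nonneg fun j _ => sq_nonneg _
  · obtain ⟨n, hn⟩ := exists_nat_ge ((D + 1) / ε)
    obtain ⟨K, hK, hm⟩ := moments n
    obtain ⟨N₁, hN₁⟩ := exists_nat_ge K
    refine ⟨N₁, fun N hNN d hd hN _ i => ?_⟩
    have hd' : (1 : ℝ) ≤ d := by exact_mod_cast hd
    have hN1 : (1 : ℝ) ≤ N := by
      have : 1 ≤ N := by omega
      exact_mod_cast this
    have hN0 : (0 : ℝ) < N := by linarith
    have hKN : K ≤ N := hN₁.trans (by exact_mod_cast hNN)
    have hNe : (0 : ℝ) < (N : ℝ) ^ ε := Real.rpow_pos_of_pos hN0 _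
    have main := PrReg_le (N := N) (d := d) (fun A =>
        (N : ℝ) ^ ε * (d : ℝ) ^ (2 * r - 2) ≤
          (A ^ (2 * r)) i i - (d : ℝ) ^ (2 * r) / (N : ℝ)) (fun A => (Xf d i A + d) ^ n)
        (((N : ℝ) ^ ε * (d : ℝ) ^ 2) ^ n) (K * ((d : ℝ) ^ 2) ^ n) (by positivity) (by positivity)
        (fun A h => by have := Xf_nonneg h i; positivity)
        (fun A h hE => by
          have h1 := hE.trans (pow_le_Xf h r hr i)
          have h2 : (N : ℝ) ^ ε * (d : ℝ) ^ 2 ≤ Xf d i A := by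
            have hp : (0 : ℝ) < (d : ℝ) ^ (2 * (r - 2)) := by positivity
            refine le_of_mul_le_mul_left (le_trans (le_of_eq ?_) h1) hp
            rw [show 2 * r - 2 = 2 * (r - 2) + 2 by omega, pow_add]
            ring
          refine pow_le_pow_left₀ (by positivity) ?_ n
          linarith)
        (hm N d hd hN i)
    refine main.trans ?_
    have e : K * ((d : ℝ) ^ 2) ^ n / ((N : ℝ) ^ ε * (d : ℝ) ^ 2) ^ n = K / ((N : ℝ) ^ ε) ^ n := by
      rw [mul_pow]; field_simp
    rw [e, ← Real.rpow_natCast, ← Real.rpow_mul hN0.le]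
    have hn' : D + 1 ≤ ε * n := by
      rw [div_le_iff₀ hε] at hn; linarith
    calc K / (N : ℝ) ^ (ε * n) ≤ N / (N : ℝ) ^ (D + 1) := by
          gcongr
      _ = (N : ℝ) ^ (-D) := by
          rw [Real.rpow_add hN0, Real.rpow_one, Real.rpow_neg hN0.le]
          field_simp

end
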